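/- Let p be a prime, k ≥ 2, s ≥ 1, and suppose there exists at least one tuple of units (y₁,…,y_s) modulo p^γ with y₁^k + ⋯ + y_s^k ≡ m (mod p^γ), where γ = γ(k,p). Then for every t ≥ γ and every lift m' of m modulo p^t with m' ≡ m (mod p^γ), one has M_s(p^t, m') > 0; in fact p^t · M_s(p^t, m') = p^{s(t-γ)} · p^γ · M_s(p^γ, m). -/

import Mathlib

/-- τ(k,p): the exact power of p dividing k. -/
def tau (k p : ℕ) : ℕ := k.factorization p

/-- γ(k,p) = τ+2 if p = 2 and τ > 0, and τ+1 otherwise. -/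
def gam (k p : ℕ) : ℕ := if p = 2 ∧ 0 < tau k p then tau k p + 2 else tau k p + 1

/-- M_s(h,m) = #{(y₁,…,y_s) ∈ ((ℤ/hℤ)^×)^s : y₁^k + ⋯ + y_s^k = m in ℤ/hℤ}. -/
noncomputable def M (k s h : ℕ) (m : ZMod h) : ℕ :=
  Nat.card {y : Fin s → (ZMod h)ˣ // (∑ i, ((y i : ZMod h)) ^ k) = m}

/-!
The individual solutions modulo `p ^ γ` need not all have the same number of lifts: for `p = k = 3`
and `t = 3`, the cube of a unit modulo `27` depends only on the unit modulo `9`, so either all lifts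
of a solution are solutions or none is. What is invariant is the number of unit `k`-th roots of a
residue. Indeed, every residue `≡ 1 (mod p ^ γ)` is a `k`-th power modulo `p ^ t`, so the image of
the `k`-th power map modulo `p ^ t` is the preimage of its image modulo `p ^ γ`. The two images
therefore have the same index, and this index is the order of the kernel of the `k`-th power map.

Choosing all variables but one freely, each free variable has `p ^ (t - γ)` lifts, while the last
one has equally many choices at both levels.
-/

section LiftingTheExponent

variable {p k e : ℕ}

theorem emultiplicity_int_pow_sub_pow (hp : p.Prime) {x y : ℤ} (hxy : (p : ℤ) ∣ x - y)
    (hxy₄ : p = 2 → 2 ∣ k → 4 ∣ x - y) (hx : ¬(p : ℤ) ∣ x) :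
    emultiplicity (p : ℤ) (x ^ k - y ^ k) = emultiplicity (p : ℤ) (x - y) + emultiplicity p k := by
  rcases hp.eq_two_or_odd' with rfl | hodd
  · by_cases hk : 2 ∣ k
    · rw [← Int.natCast_emultiplicity 2 k]
      exact Int.two_pow_sub_pow' k (hxy₄ rfl hk) hx
    · rw [emultiplicity_pow_sub_pow_of_prime (Nat.prime_iff_prime_int.mp hp) hxy hx (mod_cast hk),
        emultiplicity_eq_zero.2 hk, add_zero]
  · exact Int.emultiplicity_pow_sub_pow hp hodd hxy hx k

theorem emultiplicity_eq_tau (hp : p.Prime) (hk : k ≠ 0) : emultiplicity p k = tau k p := by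
  have : Fact p.Prime := ⟨hp⟩
  rw [tau, Nat.factorization_def k hp, padicValNat_eq_emultiplicity hk]

theorem pow_dvd_one_add_pow_sub_one_add_pow_iff (hp : p.Prime) (hk : k ≠ 0) (he : e ≠ 0)
    (he₂ : p = 2 → 2 ∣ k → 2 ≤ e) (n : ℕ) (a b : ℤ) :
    (p : ℤ) ^ (e + n + tau k p) ∣ (1 + (p : ℤ) ^ e * a) ^ k - (1 + (p : ℤ) ^ e * b) ^ k ↔
      (p : ℤ) ^ n ∣ a - b := by
  have hsub : (1 + (p : ℤ) ^ e * a) - (1 + (p : ℤ) ^ e * b) = (p : ℤ) ^ e * (a - b) := by ring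
  have hpe : (p : ℤ) ∣ (p : ℤ) ^ e := dvd_pow_self _ he
  have hunit : ¬(p : ℤ) ∣ 1 + (p : ℤ) ^ e * a := fun h =>
    (Nat.prime_iff_prime_int.mp hp).not_dvd_one ((dvd_add_left (hpe.mul_right a)).1 h)
  have hfour : p = 2 → 2 ∣ k → 4 ∣ (1 + (p : ℤ) ^ e * a) - (1 + (p : ℤ) ^ e * b) := by
    rintro rfl hk₂
    rw [hsub]
    exact (pow_dvd_pow (2 : ℤ) (he₂ rfl hk₂)).mul_right _
  rw [pow_dvd_iff_le_emultiplicity,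
    emultiplicity_int_pow_sub_pow hp (hsub ▸ hpe.mul_right _) hfour hunit,
    emultiplicity_eq_tau hp hk, Nat.cast_add, ENat.add_le_add_iff_right (ENat.natCast_ne_top _),
    ← pow_dvd_iff_le_emultiplicity, hsub, pow_add,
    mul_dvd_mul_iff_left (pow_ne_zero e (mod_cast hp.ne_zero))]

/- By lifting the exponent, `1 + p ^ e * a ↦ (1 + p ^ e * a) ^ k = 1 + p ^ (e + tau k p) * b`
induces an injection `a ↦ b` of the finite set `ZMod (p ^ n)` into itself, hence a surjection. -/
theorem exists_pow_dvd_pow_sub (hp : p.Prime) (hk : k ≠ 0) (he : e ≠ 0)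
    (he₂ : p = 2 → 2 ∣ k → 2 ≤ e) (n : ℕ) {u : ℤ} (hu : (p : ℤ) ^ (e + tau k p) ∣ u - 1) :
    ∃ z : ℤ, (p : ℤ) ^ (e + n + tau k p) ∣ z ^ k - u := by
  have : NeZero p := ⟨hp.ne_zero⟩
  have hpow (a : ℤ) : (p : ℤ) ^ (e + tau k p) ∣ (1 + (p : ℤ) ^ e * a) ^ k - 1 := by
    simpa using (pow_dvd_one_add_pow_sub_one_add_pow_iff hp hk he he₂ 0 a 0).2 (by simp)
  choose b hb using hpow
  have hsub (a c : ℤ) : (p : ℤ) ^ (e + n + tau k p) ∣ (p : ℤ) ^ (e + tau k p) * (a - c) ↔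
      (p : ℤ) ^ n ∣ a - c := by
    rw [add_right_comm, pow_add _ (e + _),
      mul_dvd_mul_iff_left (pow_ne_zero _ (mod_cast hp.ne_zero))]
  have hinj : Function.Injective fun x : ZMod (p ^ n) => (b x.val : ZMod (p ^ n)) := by
    intro x y hxy
    rw [ZMod.intCast_eq_intCast_iff_dvd_sub, Nat.cast_pow, ← hsub, mul_sub, ← hb, ← hb,
      sub_sub_sub_cancel_right, pow_dvd_one_add_pow_sub_one_add_pow_iff hp hk he he₂,
      ← Nat.cast_pow, ← ZMod.intCast_eq_intCast_iff_dvd_sub] at hxy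
    simpa using hxy
  obtain ⟨c, hc⟩ := hu
  obtain ⟨x, hx⟩ := Finite.surjective_of_injective hinj (c : ZMod (p ^ n))
  refine ⟨1 + (p : ℤ) ^ e * x.val, ?_⟩
  rw [← sub_sub_sub_cancel_right _ u 1, hb, hc, ← mul_sub, hsub]
  exact mod_cast (ZMod.intCast_eq_intCast_iff_dvd_sub _ _ _).1 hx.symm

end LiftingTheExponent

section GroupHom

variable {G H : Type*} [Group G] [Group H] {f : G →* H}

theorem sum_comp_eq_card_ker_nsmul [Fintype G] [Fintype H] {A : Type*} [AddCommMonoid A]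
    (hf : Function.Surjective f) (F : H → A) :
    ∑ g, F (f g) = Nat.card f.ker • ∑ h, F h := by
  classical
  rw [Finset.sum_comp F f, Finset.image_univ_of_surjective hf, Finset.smul_sum]
  refine Finset.sum_congr rfl fun h _ => ?_
  rw [← Nat.card_congr (MonoidHom.fiberEquivKerOfSurjective hf h), ← Fintype.card_subtype,
    ← Nat.card_eq_fintype_card]
  rfl

theorem card_ker_eq_card_ker_of_comp_eq [Finite G] {α : G →* G} {β : H →* H}
    (hf : Function.Surjective f) (hcomp : f.comp α = β.comp f) (hker : f.ker ≤ α.range) :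
    Nat.card α.ker = Nat.card β.ker := by
  have : Finite H := Finite.of_surjective f hf
  have hrange : α.range.map f = β.range := by
    rw [MonoidHom.map_range, hcomp, MonoidHom.range_comp, MonoidHom.range_eq_top.2 hf,
      ← MonoidHom.range_eq_map]
  rw [← Subgroup.index_range, ← Subgroup.index_range, ← hrange, Subgroup.index_map_eq _ hf hker]

end GroupHom

theorem card_unit_roots_pow {A : Type*} [CommMonoid A] (k : ℕ) (z : Aˣ) :
    Nat.card {y : Aˣ // (y : A) ^ k = (z : A) ^ k} =
      Nat.card (powMonoidHom k : Aˣ →* Aˣ).ker := by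
  rw [← Nat.card_congr ((powMonoidHom k : Aˣ →* Aˣ).fiberEquivKer z)]
  exact Nat.card_congr (Equiv.subtypeEquivRight fun y => by simp [← Units.val_inj])

/-- The number of representations of `m` as a sum of `s` `k`-th powers of units of `R`; over
`ZMod h` this is `M k s h m`. -/
noncomputable def unitPowSumCount (R : Type*) [CommRing R] (k s : ℕ) (m : R) : ℕ :=
  Nat.card {y : Fin s → Rˣ // ∑ i, (y i : R) ^ k = m}

section UnitPowSumCount

variable {R S : Type*} [CommRing R] [CommRing S] {k : ℕ}

theorem unitPowSumCount_one (m : R) :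
    unitPowSumCount R k 1 m = Nat.card {y : Rˣ // (y : R) ^ k = m} :=
  Nat.card_congr ((Equiv.funUnique (Fin 1) Rˣ).subtypeEquiv fun y => by simp)

theorem unitPowSumCount_succ [Fintype Rˣ] (s : ℕ) (m : R) :
    unitPowSumCount R k (s + 1) m = ∑ y : Rˣ, unitPowSumCount R k s (m - (y : R) ^ k) := by
  simp only [unitPowSumCount]
  rw [← Nat.card_sigma]
  exact Nat.card_congr <|
    ((Fin.consEquiv fun _ => Rˣ).symm.subtypeEquiv fun y => by
      simp [Fin.sum_univ_succ, Fin.consEquiv, Fin.tail, eq_sub_iff_add_eq']).trans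
    (Equiv.subtypeProdEquivSigmaSubtype fun (y : Rˣ) (z : Fin s → Rˣ) =>
      ∑ i, (z i : R) ^ k = m - (y : R) ^ k)

variable {φ : R →+* S}

theorem exists_unit_pow_eq_of_map (hφ : Function.Surjective (Units.map (φ : R →* S)))
    (hroot : ∀ w : R, φ w = 1 → ∃ z : Rˣ, (z : R) ^ k = w) {x : R}
    (hx : ∃ y : Sˣ, (y : S) ^ k = φ x) : ∃ y : Rˣ, (y : R) ^ k = x := by
  obtain ⟨y, hy⟩ := hx
  obtain ⟨y, rfl⟩ := hφ y
  have hquot : φ (x * (↑y⁻¹ : R) ^ k) = 1 := by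
    rw [map_mul, ← hy, Units.coe_map, MonoidHom.coe_coe, ← map_pow, ← map_mul, ← mul_pow]
    simp
  obtain ⟨z, hz⟩ := hroot _ hquot
  exact ⟨z * y, by rw [Units.val_mul, mul_pow, hz, mul_assoc, ← mul_pow]; simp⟩

theorem card_unit_roots_map [Finite Rˣ] (hφ : Function.Surjective (Units.map (φ : R →* S)))
    (hroot : ∀ w : R, φ w = 1 → ∃ z : Rˣ, (z : R) ^ k = w) (x : R) :
    Nat.card {y : Rˣ // (y : R) ^ k = x} = Nat.card {y : Sˣ // (y : S) ^ k = φ x} := by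
  by_cases hx : ∃ y : Rˣ, (y : R) ^ k = x
  · obtain ⟨y, rfl⟩ := hx
    have hmap : φ ((y : R) ^ k) = (Units.map (φ : R →* S) y : S) ^ k := by simp
    rw [hmap, card_unit_roots_pow, card_unit_roots_pow]
    refine card_ker_eq_card_ker_of_comp_eq hφ (by ext; simp) fun w hw => ?_
    obtain ⟨z, hz⟩ := hroot w (congrArg Units.val hw)
    exact ⟨z, Units.ext hz⟩
  · have hφx := mt (exists_unit_pow_eq_of_map hφ hroot) hx
    rw [← nonempty_subtype, not_nonempty_iff] at hx hφx
    rw [Nat.card_of_isEmpty, Nat.card_of_isEmpty]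

theorem unitPowSumCount_succ_eq_card_ker_pow_mul [Finite Rˣ]
    (hφ : Function.Surjective (Units.map (φ : R →* S)))
    (hroot : ∀ w : R, φ w = 1 → ∃ z : Rˣ, (z : R) ^ k = w) (s : ℕ) (m : R) :
    unitPowSumCount R k (s + 1) m =
      Nat.card (Units.map (φ : R →* S)).ker ^ s * unitPowSumCount S k (s + 1) (φ m) := by
  have := Fintype.ofFinite Rˣ
  have : Finite Sˣ := Finite.of_surjective _ hφ
  have := Fintype.ofFinite Sˣ
  induction s generalizing m with
  | zero => simpa [unitPowSumCount_one] using card_unit_roots_map hφ hroot m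
  | succ s ih =>
    calc unitPowSumCount R k (s + 2) m
        = ∑ y : Rˣ, Nat.card (Units.map (φ : R →* S)).ker ^ s *
            unitPowSumCount S k (s + 1) (φ m - (Units.map (φ : R →* S) y : S) ^ k) := by
          simp [unitPowSumCount_succ (s + 1), ih]
      _ = Nat.card (Units.map (φ : R →* S)).ker ^ (s + 1) *
            unitPowSumCount S k (s + 2) (φ m) := by
          rw [← Finset.mul_sum, sum_comp_eq_card_ker_nsmul hφ
            fun y : Sˣ => unitPowSumCount S k (s + 1) (φ m - (y : S) ^ k),
            ← unitPowSumCount_succ, smul_eq_mul, pow_succ, mul_assoc]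

end UnitPowSumCount

section PrimePower

variable {p k t : ℕ}

theorem card_ker_unitsMap_prime_pow (hp : p.Prime) {n : ℕ} (hn : n ≠ 0) (hnt : n ≤ t) :
    Nat.card (ZMod.unitsMap (pow_dvd_pow p hnt)).ker = p ^ (t - n) := by
  have : NeZero p := ⟨hp.ne_zero⟩
  have htotient : (p ^ t).totient = p ^ (t - n) * (p ^ n).totient := by
    rw [Nat.totient_prime_pow hp (by lia), Nat.totient_prime_pow hp (by lia), ← mul_assoc,
      ← pow_add, show t - n + (n - 1) = t - 1 by lia]
  have hcard := (ZMod.unitsMap (pow_dvd_pow p hnt)).ker.card_mul_index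
  rw [Subgroup.index_ker, MonoidHom.range_eq_top.2 (ZMod.unitsMap_surjective _),
    Subgroup.card_top] at hcard
  simp only [Nat.card_eq_fintype_card (α := (ZMod _)ˣ), ZMod.card_units_eq_totient,
    htotient] at hcard
  exact Nat.eq_of_mul_eq_mul_right (Nat.totient_pos.2 (pow_pos hp.pos n)) hcard

theorem exists_gam_eq_add_tau (hp : p.Prime) (hk : k ≠ 0) :
    ∃ e ≠ 0, (p = 2 → 2 ∣ k → 2 ≤ e) ∧ gam k p = e + tau k p := by
  have htau : p ∣ k → 0 < tau k p := hp.factorization_pos_of_dvd hk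
  unfold gam
  split_ifs with h
  · exact ⟨2, two_ne_zero, fun _ _ => le_rfl, add_comm _ _⟩
  · exact ⟨1, one_ne_zero, fun h₂ hk₂ => (h ⟨h₂, htau (h₂ ▸ hk₂)⟩).elim, add_comm _ _⟩

theorem gam_ne_zero (k p : ℕ) : gam k p ≠ 0 := by
  unfold gam
  split_ifs <;> lia

theorem exists_unit_pow_eq_of_castHom_eq_one (hp : p.Prime) (hk : k ≠ 0) (ht : gam k p ≤ t)
    (w : ZMod (p ^ t)) (hw : ZMod.castHom (pow_dvd_pow p ht) (ZMod (p ^ gam k p)) w = 1) :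
    ∃ z : (ZMod (p ^ t))ˣ, (z : ZMod (p ^ t)) ^ k = w := by
  obtain ⟨e, he, he₂, hgam⟩ := exists_gam_eq_add_tau hp hk
  obtain ⟨u, rfl⟩ := ZMod.intCast_surjective w
  have hu : (p : ℤ) ^ gam k p ∣ u - 1 := by
    rw [map_intCast, ← Int.cast_one, eq_comm, ZMod.intCast_eq_intCast_iff_dvd_sub] at hw
    exact mod_cast hw
  have hunit : IsUnit (u : ZMod (p ^ t)) := by
    have hpu : ¬(p : ℤ) ∣ u := fun h => (Nat.prime_iff_prime_int.mp hp).not_dvd_one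
      ((dvd_sub_right h).1 ((dvd_pow_self _ (gam_ne_zero k p)).trans hu))
    rw [ZMod.coe_int_isUnit_iff_isCoprime, Nat.cast_pow]
    exact ((Nat.prime_iff_prime_int.mp hp).coprime_iff_not_dvd.2 hpu).pow_left
  obtain ⟨z, hz⟩ := exists_pow_dvd_pow_sub hp hk he he₂ (t - gam k p) (hgam ▸ hu)
  have hzu : (z : ZMod (p ^ t)) ^ k = u := by
    rw [show e + (t - gam k p) + tau k p = t by lia, ← Nat.cast_pow,
      ← ZMod.intCast_eq_intCast_iff_dvd_sub] at hz
    exact mod_cast hz.symm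
  rw [← hzu, isUnit_pow_iff hk] at hunit
  exact ⟨hunit.unit, hzu⟩

theorem M_prime_pow_succ (hp : p.Prime) (hk : k ≠ 0) (ht : gam k p ≤ t) (s : ℕ)
    (m : ZMod (p ^ t)) :
    M k (s + 1) (p ^ t) m = (p ^ (t - gam k p)) ^ s *
      M k (s + 1) (p ^ gam k p) (ZMod.castHom (pow_dvd_pow p ht) (ZMod (p ^ gam k p)) m) := by
  have : NeZero p := ⟨hp.ne_zero⟩
  rw [← card_ker_unitsMap_prime_pow hp (gam_ne_zero k p) ht]
  exact unitPowSumCount_succ_eq_card_ker_pow_mul (ZMod.unitsMap_surjective _)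
    (exists_unit_pow_eq_of_castHom_eq_one hp hk ht) s m

end PrimePower

theorem lift_unit_solutions (p k s : ℕ) (hp : p.Prime) (hk : 2 ≤ k) (hs : 1 ≤ s)
    (m : ZMod (p ^ gam k p))
    (hex : ∃ y : Fin s → (ZMod (p ^ gam k p))ˣ,
      (∑ i, ((y i : ZMod (p ^ gam k p))) ^ k) = m)
    (t : ℕ) (ht : gam k p ≤ t) (m' : ZMod (p ^ t))
    (hm' : ZMod.castHom (pow_dvd_pow p ht) (ZMod (p ^ gam k p)) m' = m) :
    0 < M k s (p ^ t) m' ∧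
      p ^ t * M k s (p ^ t) m'
        = p ^ (s * (t - gam k p)) * p ^ gam k p * M k s (p ^ gam k p) m := by
  have : NeZero p := ⟨hp.ne_zero⟩
  obtain ⟨r, rfl⟩ := Nat.exists_eq_add_of_le' hs
  have hlift := M_prime_pow_succ hp (by lia) ht r m'
  rw [hm'] at hlift
  rw [hlift]
  constructor
  · obtain ⟨y, hy⟩ := hex
    have : Nonempty {y : Fin (r + 1) → (ZMod (p ^ gam k p))ˣ //
      ∑ i, (y i : ZMod (p ^ gam k p)) ^ k = m} := ⟨⟨y, hy⟩⟩
    exact Nat.mul_pos (pow_pos (pow_pos hp.pos _) _) Nat.card_pos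
  · obtain ⟨d, rfl⟩ := Nat.exists_eq_add_of_le ht
    rw [Nat.add_sub_cancel_left]
    ring
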